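/- arXiv:math/0210042 — 2 statements merged into one kernel-verified Lean document; each statement's English description precedes it below -/
import Mathlib

section
/- Let R be a Noetherian regular local ring and M a nonzero finitely generated R-module. Then M is a free R-module if and only if the depth of M equals the Krull dimension of R. -/
section

open IsLocalRing RingTheory.Sequence Pointwise

universe u

/-- The quotient of a regular local ring by an element of `m \ m²` is regular. -/
lemma quot_regular {R : Type u} [CommRing R] [IsRegularLocalRing R] {d : ℕ}
    (hd : (maximalIdeal R).spanFinrank = d + 1) {x : R} (hx : x ∈ maximalIdeal R)
    (hx2 : x ∉ maximalIdeal R ^ 2) :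
    IsRegularLocalRing (R ⧸ Ideal.span {x}) ∧
    ∀ [IsLocalRing (R ⧸ Ideal.span {x})],
      maximalIdeal (R ⧸ Ideal.span {x}) = (maximalIdeal R).map (Ideal.Quotient.mk _) ∧
      (maximalIdeal (R ⧸ Ideal.span {x})).spanFinrank = d := by
  classical
  have hne : Ideal.span {x} ≠ ⊤ := by
    intro h
    have := (Ideal.span_singleton_le_iff_mem (maximalIdeal R)).2 hx
    rw [h] at this
    exact (maximalIdeal.isMaximal R).ne_top (top_le_iff.1 this)
  have : Nontrivial (R ⧸ Ideal.span {x}) := Ideal.Quotient.nontrivial_iff.2 hne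
  have hloc : IsLocalRing (R ⧸ Ideal.span {x}) :=
    IsLocalRing.of_surjective' (Ideal.Quotient.mk _) Ideal.Quotient.mk_surjective
  have hmap : maximalIdeal (R ⧸ Ideal.span {x}) =
      (maximalIdeal R).map (Ideal.Quotient.mk (Ideal.span {x})) := by
    symm
    rcases Ideal.map_eq_top_or_isMaximal_of_surjective (Ideal.Quotient.mk (Ideal.span {x}))
      Ideal.Quotient.mk_surjective (maximalIdeal.isMaximal R) with h | h
    · exfalso
      have h2 := Ideal.comap_map_of_surjective' (Ideal.Quotient.mk (Ideal.span {x}))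
        Ideal.Quotient.mk_surjective (maximalIdeal R)
      rw [h, Ideal.comap_top, Ideal.mk_ker,
        sup_eq_left.2 ((Ideal.span_singleton_le_iff_mem (maximalIdeal R)).2 hx)] at h2
      exact (maximalIdeal.isMaximal R).ne_top h2.symm
    · exact IsLocalRing.eq_maximalIdeal h
  obtain ⟨s, hs, hspan⟩ := Submodule.FG.exists_span_finset_card_eq_spanFinrank
    (maximalIdeal R).fg_of_isNoetherianRing
  obtain ⟨a, ha, hax⟩ := Submodule.mem_span_finset.1 (hspan ▸ hx)
  have hsm : ∀ y ∈ s, y ∈ maximalIdeal R := fun y hy => hspan ▸ Submodule.subset_span hy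
  obtain ⟨y, hy, hay⟩ : ∃ y ∈ s, a y ∉ maximalIdeal R := by
    by_contra! h
    apply hx2
    rw [← hax, pow_two]
    exact Ideal.sum_mem _ fun i hi => Ideal.mul_mem_mul (h i hi) (hsm i hi)
  have hspan' : maximalIdeal (R ⧸ Ideal.span {x}) =
      Ideal.span (((s.erase y).image (Ideal.Quotient.mk (Ideal.span {x})) : Finset _) :
        Set (R ⧸ Ideal.span {x})) := by
    rw [hmap, ← hspan]
    change Ideal.map _ (Ideal.span _) = _
    rw [Ideal.map_span]
    apply le_antisymm
    · rw [Ideal.span_le]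
      rintro _ ⟨z, hz, rfl⟩
      have key : ∀ z ∈ s, z ≠ y → Ideal.Quotient.mk (Ideal.span {x}) z ∈
          Ideal.span (((s.erase y).image (Ideal.Quotient.mk (Ideal.span {x})) : Finset _) :
        Set (R ⧸ Ideal.span {x})) := fun z hz hzy =>
          Ideal.subset_span (by
            rw [Finset.mem_coe]
            exact Finset.mem_image_of_mem _ (Finset.mem_erase.2 ⟨hzy, hz⟩))
      by_cases hzy : z = y
      · subst hzy
        have hu : IsUnit (a z) := by simpa using hay
        have h0 : Ideal.Quotient.mk (Ideal.span {x}) x = 0 :=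
          Ideal.Quotient.eq_zero_iff_mem.2 (Ideal.mem_span_singleton_self x)
        have hax' := congrArg (Ideal.Quotient.mk (Ideal.span {x})) hax
        rw [← Finset.add_sum_erase _ _ hy, map_add, h0] at hax'
        clear h0
        have h0 := hax'
        simp only [smul_eq_mul, map_mul, map_sum] at h0
        have h1 := eq_neg_of_add_eq_zero_left h0
        rw [SetLike.mem_coe, ← Ideal.unit_mul_mem_iff_mem _ (hu.map (Ideal.Quotient.mk (Ideal.span {x}))), h1]
        refine neg_mem (Ideal.sum_mem _ fun i hi => Ideal.mul_mem_left _ _ ?_)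
        exact key i (Finset.mem_of_mem_erase hi) (Finset.ne_of_mem_erase hi)
      · exact key z hz hzy
    · apply Ideal.span_mono
      rw [Finset.coe_image]
      exact Set.image_mono (by simp)
  have hle : (maximalIdeal (R ⧸ Ideal.span {x})).spanFinrank ≤ d := by
    rw [hspan']
    refine (Submodule.spanFinrank_span_le_ncard_of_finite (Finset.finite_toSet _)).trans ?_
    rw [Set.ncard_coe_finset]
    refine Finset.card_image_le.trans ?_
    rw [Finset.card_erase_of_mem hy, hs, hd]; rfl
  have hdim : ((d + 1 : ℕ) : WithBot ℕ∞) ≤ ringKrullDim (R ⧸ Ideal.span {x}) + 1 := by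
    have h1 := (isRegularLocalRing_iff R).1 inferInstance
    rw [hd] at h1
    rw [h1]
    have h2 := ringKrullDim_le_ringKrullDim_quotSMulTop_succ hx
    have h : Ideal.span {x} = x • (⊤ : Ideal R) := by simp [← Submodule.ideal_span_singleton_smul]
    rwa [← ringKrullDim_eq_of_ringEquiv (Ideal.quotientEquivAlgOfEq R h).toRingEquiv] at h2
  have hdim' : (d : WithBot ℕ∞) ≤ ringKrullDim (R ⧸ Ideal.span {x}) := by
    generalize ringKrullDim (R ⧸ Ideal.span {x}) = k at hdim
    push_cast at hdim
    induction k using WithBot.recBotCoe with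
    | bot => simp at hdim
    | coe k =>
      have h5 : (d : ℕ∞) + 1 ≤ k + 1 := by exact_mod_cast hdim
      have h6 : (d : ℕ∞) ≤ k := (ENat.add_le_add_iff_right (by simp)).1 h5
      exact_mod_cast h6
  have hreg : IsRegularLocalRing (R ⧸ Ideal.span {x}) :=
    IsRegularLocalRing.of_spanFinrank_maximalIdeal_le _ (le_trans (by exact_mod_cast hle) hdim')
  refine ⟨hreg, fun {_} => ⟨hmap, le_antisymm hle ?_⟩⟩
  have h3 := (isRegularLocalRing_iff (R ⧸ Ideal.span {x})).1 hreg
  rw [← h3] at hdim'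
  exact_mod_cast hdim'

/-- Prime avoidance for `m \ m²`. -/
lemma avoid {R : Type u} [CommRing R] [IsLocalRing R] [IsNoetherianRing R]
    (hm : maximalIdeal R ≠ ⊥) (S : Set (Ideal R)) (hS : S.Finite)
    (hp : ∀ p ∈ S, p.IsPrime ∧ p ≠ maximalIdeal R) :
    ∃ x ∈ maximalIdeal R, x ∉ maximalIdeal R ^ 2 ∧ ∀ p ∈ S, x ∉ p := by
  classical
  by_contra! h
  have hsub : ((maximalIdeal R : Ideal R) : Set R) ⊆
      ⋃ i ∈ (↑(insert (maximalIdeal R ^ 2) hS.toFinset) : Set (Ideal R)), (id i : Ideal R) := by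
    intro x hx
    simp only [Finset.coe_insert, Set.Finite.coe_toFinset, Set.mem_iUnion]
    by_cases h2 : x ∈ maximalIdeal R ^ 2
    · exact ⟨_, Set.mem_insert _ _, h2⟩
    · obtain ⟨p, hpS, hxp⟩ := h x hx h2
      exact ⟨p, Set.mem_insert_of_mem _ hpS, hxp⟩
  obtain ⟨i, hi, hle⟩ := (Ideal.subset_union_prime (maximalIdeal R ^ 2) (maximalIdeal R ^ 2)
    (f := (id : Ideal R → Ideal R)) (fun i hi hne _ => by
      rw [Finset.mem_insert] at hi
      exact (hp i (by simpa using hi.resolve_left hne)).1)).1 hsub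
  rw [Finset.mem_insert] at hi
  rcases hi with rfl | hi
  · apply hm
    apply Submodule.eq_bot_of_le_smul_of_le_jacobson_bot (maximalIdeal R) _
      (maximalIdeal R).fg_of_isNoetherianRing
    · simpa [pow_two] using hle
    · exact maximalIdeal_le_jacobson _
  · have := hp i (by simpa using hi)
    exact this.2 ((maximalIdeal.isMaximal R).eq_of_le this.1.ne_top hle).symm

lemma field_of_zero {R : Type u} [CommRing R] [IsRegularLocalRing R]
    (h : (maximalIdeal R).spanFinrank = 0) : IsField R := by
  rw [Submodule.spanFinrank_eq_zero_iff_eq_bot (maximalIdeal R).fg_of_isNoetherianRing] at h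
  exact isField_iff_maximalIdeal_eq.2 h

lemma regular_domain (d : ℕ) : ∀ (R : Type u) [CommRing R] [IsRegularLocalRing R],
    (maximalIdeal R).spanFinrank = d →
    IsDomain R ∧ ∃ rs : List R, rs.length = d ∧ (∀ r ∈ rs, r ∈ maximalIdeal R) ∧
      IsWeaklyRegular R rs := by
  induction d with
  | zero =>
    intro R _ _ h
    exact ⟨(field_of_zero h).isDomain, [], rfl, by simp, IsWeaklyRegular.nil R R⟩
  | succ d ih =>
    intro R _ _ h
    have hm : maximalIdeal R ≠ ⊥ := by
      intro h0; rw [h0, Submodule.spanFinrank_bot] at h; omega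
    obtain ⟨x, hx, hx2, hxp⟩ := avoid hm (minimalPrimes R)
      (minimalPrimes.finite_of_isNoetherianRing R) (fun p hp => ⟨hp.1.1, fun he => by
        have h1 := (isRegularLocalRing_iff R).1 inferInstance
        have := hp.1.1
        rw [h, ← IsLocalRing.maximalIdeal_height_eq_ringKrullDim, ← he,
          Ideal.height_eq_zero_iff.2 hp] at h1
        exact absurd h1 (by exact_mod_cast Nat.succ_ne_zero d)⟩)
    obtain ⟨hreg, hq⟩ := quot_regular h hx hx2
    obtain ⟨hmap, hq⟩ := hq
    obtain ⟨hdom, rs, hlen, hmem, hrs⟩ := ih _ hq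
    have hprime : (Ideal.span {x}).IsPrime := (Ideal.Quotient.isDomain_iff_prime _).1 hdom
    obtain ⟨q, hqm, hqle⟩ := Ideal.exists_minimalPrimes_le (bot_le : ⊥ ≤ Ideal.span {x})
    have hqp : q.IsPrime := hqm.1.1
    have hq0 : q = ⊥ := by
      apply Submodule.eq_bot_of_le_smul_of_le_jacobson_bot (maximalIdeal R) q
        q.fg_of_isNoetherianRing
      · intro y hy
        obtain ⟨z, rfl⟩ := Ideal.mem_span_singleton'.1 (hqle hy)
        rw [mul_comm]
        exact Ideal.mul_mem_mul hx ((hqp.mem_or_mem hy).resolve_right (hxp q hqm))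
      · exact maximalIdeal_le_jacobson _
    have hD : IsDomain R := by
      rw [hq0] at hqp
      exact (IsDomain.of_bot_isPrime R)
    refine ⟨hD, ?_⟩
    have hx0 : x ≠ 0 := by rintro rfl; exact hx2 (zero_mem _)
    choose g hg using (Ideal.Quotient.mk_surjective (I := Ideal.span {x}))
    have hgm : (rs.map g).map (Ideal.Quotient.mk (Ideal.span {x})) = rs := by
      simp [List.map_map, Function.comp_def, hg]
    refine ⟨x :: rs.map g, by simp [hlen], ?_, ?_⟩
    · intro r hr
      rcases List.mem_cons.1 hr with rfl | hr
      · exact hx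
      · obtain ⟨y, hy, rfl⟩ := List.mem_map.1 hr
        by_contra hu
        have hu' : IsUnit (g y) := by simpa using hu
        have := hu'.map (Ideal.Quotient.mk (Ideal.span {x}))
        rw [hg] at this
        exact (mem_maximalIdeal _).1 (hmem y hy) this
    · rw [isWeaklyRegular_cons_iff']
      refine ⟨fun a b hab => mul_left_cancel₀ hx0 hab, ?_⟩
      rw [hgm]
      have hI : x • (⊤ : Ideal R) = Ideal.span {x} := by
        simp [← Submodule.ideal_span_singleton_smul]
      let e : QuotSMulTop x R ≃ₗ[R] (R ⧸ Ideal.span {x}) := Submodule.quotEquivOfEq _ _ hI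
      exact ((e.extendScalarsOfSurjective Ideal.Quotient.mk_surjective).isWeaklyRegular_congr
        rs).2 hrs

open CategoryTheory Abelian in
lemma free_of_depth (d : ℕ) : ∀ (R : Type u) [CommRing R] [IsRegularLocalRing R]
    (M : Type u) [AddCommGroup M] [Module R M] [Module.Finite R M] [Nontrivial M],
    (maximalIdeal R).spanFinrank = d →
    (∃ rs : List R, rs.length = d ∧ (∀ r ∈ rs, r ∈ maximalIdeal R) ∧ IsRegular M rs) →
    Module.Free R M := by
  induction d with
  | zero =>
    intro R _ _ M _ _ _ _ h _
    let := (field_of_zero h).toField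
    exact Module.Free.of_divisionRing R M
  | succ d ih =>
    intro R _ _ M _ _ _ _ h ⟨rs, hlen, hmem, hrs⟩
    have hm : maximalIdeal R ≠ ⊥ := by
      intro h0; rw [h0, Submodule.spanFinrank_bot] at h; omega
    obtain ⟨r, rs, rfl⟩ := List.exists_cons_of_length_eq_add_one hlen
    have hreg := ((isRegular_cons_iff M r rs).1 hrs).1
    obtain ⟨x, hx, hx2, hxp⟩ := avoid hm (associatedPrimes R M)
      (associatedPrimes.finite R M) (fun p hp => ⟨hp.isPrime, fun he => by
        have h1 : r ∈ ⋃ p ∈ associatedPrimes R M, (p : Set R) :=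
          Set.mem_biUnion hp (by rw [he]; exact hmem r (by simp))
        rw [biUnion_associatedPrimes_eq_zero_divisors] at h1
        obtain ⟨y, hy0, hy⟩ := h1
        exact hy0 (hreg.right_eq_zero_of_smul hy)⟩)
    have hxreg : IsSMulRegular M x := by
      rw [isSMulRegular_iff_right_eq_zero_of_smul]
      intro y hy
      by_contra hy0
      have h1 : x ∈ ⋃ p ∈ associatedPrimes R M, (p : Set R) := by
        rw [biUnion_associatedPrimes_eq_zero_divisors]
        exact ⟨y, hy0, hy⟩
      obtain ⟨p, hp, hxp'⟩ := Set.mem_iUnion₂.1 h1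
      exact hxp p hp hxp'
    have hlt : ∀ (L : Type u) [AddCommGroup L] [Module R L] [Module.Finite R L] [Nontrivial L],
        maximalIdeal R • (⊤ : Submodule R L) < ⊤ := fun L _ _ _ _ =>
      (Submodule.top_ne_ideal_smul_of_le_jacobson_annihilator
        (maximalIdeal_le_jacobson _)).symm.lt_top
    have hsupp : Module.support R (R ⧸ maximalIdeal R) =
        PrimeSpectrum.zeroLocus (maximalIdeal R : Set R) := by
      rw [Module.support_eq_zeroLocus, Ideal.annihilator_quotient]
    have hext := ModuleCat.subsingleton_ext_of_exists_isRegular (maximalIdeal R)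
      (ModuleCat.of R (R ⧸ maximalIdeal R)) hsupp.subset (ModuleCat.of R M) (hlt M) _ hmem hrs
    rw [hlen] at hext
    have : Nontrivial (QuotSMulTop x M) := nontrivial_quotSMulTop_of_mem_maximalIdeal M hx
    obtain ⟨ts, htl, htm, hts⟩ := ModuleCat.exists_isRegular_of_exists_subsingleton_ext
      (maximalIdeal R) d (ModuleCat.of R (QuotSMulTop x M)) (hlt _)
      (ModuleCat.of R (R ⧸ maximalIdeal R)) hsupp (by
        intro i hi
        have zero1 := AddCommGrpCat.isZero_of_iff_subsingleton.mpr (hext i (by omega))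
        have zero2 := AddCommGrpCat.isZero_of_iff_subsingleton.mpr (hext (i + 1) (by omega))
        exact AddCommGrpCat.subsingleton_of_isZero <| ShortComplex.Exact.isZero_of_both_zeros
          ((Ext.covariant_sequence_exact₃' (ModuleCat.of R (R ⧸ maximalIdeal R))
            (IsSMulRegular.smulShortComplex_shortExact (M := ModuleCat.of R M) hxreg))
            i (i + 1) rfl)
          (zero1.eq_zero_of_src _) (zero2.eq_zero_of_tgt _))
    obtain ⟨hregx, hq⟩ := quot_regular h hx hx2
    obtain ⟨hmap, hq⟩ := hq
    have : Module.Finite (R ⧸ Ideal.span {x}) (QuotSMulTop x M) :=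
      Module.Finite.of_restrictScalars_finite R _ _
    have hmemq : ∀ r ∈ ts.map (algebraMap R (R ⧸ Ideal.span {x})),
        r ∈ maximalIdeal (R ⧸ Ideal.span {x}) := by
      intro r hr
      obtain ⟨y, hy, rfl⟩ := List.mem_map.1 hr
      rw [hmap]
      exact Ideal.mem_map_of_mem _ (htm y hy)
    have hfree := ih (R ⧸ Ideal.span {x}) (QuotSMulTop x M) hq
      ⟨ts.map (algebraMap R _), by simp [htl], hmemq,
        IsRegular.of_isWeaklyRegular_of_mem_maximalIdeal _ hmemq
          ((isWeaklyRegular_map_algebraMap_iff _ _ ts).2 hts.toIsWeaklyRegular)⟩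
    have : Module.FinitePresentation R M := Module.finitePresentation_of_finite R M
    exact (Module.free_quotSMulTop_iff_free R M (maximalIdeal_le_jacobson _ hx) hxreg).1 hfree


end

open IsLocalRing RingTheory.Sequence in
/-- Over a Noetherian regular local ring `R` (regularity being expressed by the fact that
the minimal number of generators of the maximal ideal equals the Krull dimension of `R`),
a nonzero finitely generated module `M` is free if and only if its depth (the maximal
length of an `M`-regular sequence contained in the maximal ideal) equals the Krull
dimension of `R`. -/
theorem stmt2 {R : Type*} [CommRing R] [IsLocalRing R] [IsNoetherianRing R]
    (hreg : (↑(sInf {n : ℕ | ∃ s : Finset R,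
        s.card = n ∧ Ideal.span (s : Set R) = maximalIdeal R}) : WithBot (WithTop ℕ)) =
      ringKrullDim R)
    (M : Type*) [AddCommGroup M] [Module R M] [Module.Finite R M] [Nontrivial M] :
    Module.Free R M ↔
      (↑(sSup {n : ℕ | ∃ rs : List R, rs.length = n ∧
          (∀ r ∈ rs, r ∈ maximalIdeal R) ∧ IsRegular M rs}) : WithBot (WithTop ℕ)) =
        ringKrullDim R := by
  have hsf : sInf {n : ℕ | ∃ s : Finset R,
        s.card = n ∧ Ideal.span (s : Set R) = maximalIdeal R} =
      (maximalIdeal R).spanFinrank := by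
    obtain ⟨s, hs, hspan⟩ := Submodule.FG.exists_span_finset_card_eq_spanFinrank
      (maximalIdeal R).fg_of_isNoetherianRing
    apply le_antisymm
    · exact Nat.sInf_le ⟨s, hs, hspan⟩
    · refine le_csInf (Set.nonempty_of_mem (x := (maximalIdeal R).spanFinrank) ⟨s, hs, hspan⟩) ?_
      rintro n ⟨t, rfl, ht⟩
      rw [← ht, ← Set.ncard_coe_finset]
      exact Submodule.spanFinrank_span_le_ncard_of_finite (Finset.finite_toSet _)
  rw [hsf] at hreg
  have hR : IsRegularLocalRing R := (isRegularLocalRing_iff R).2 hreg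
  rw [← hreg]
  set S := {n : ℕ | ∃ rs : List R, rs.length = n ∧
          (∀ r ∈ rs, r ∈ maximalIdeal R) ∧ IsRegular M rs} with hS
  have hub : ∀ n ∈ S, n ≤ (maximalIdeal R).spanFinrank := by
    rintro n ⟨rs, rfl, -, hrs⟩
    have h1 := Module.supportDim_add_length_eq_supportDim_of_isRegular rs hrs
    have h2 : Module.supportDim R M ≤ ringKrullDim R := Module.supportDim_le_ringKrullDim R M
    have := hrs.quot_ofList_smul_nontrivial ⊤
    have h3 := Module.supportDim_ne_bot_of_nontrivial R
      (M ⧸ Ideal.ofList rs • (⊤ : Submodule R M))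
    rw [← h1, ← hreg] at h2
    have h4 : (rs.length : WithBot ℕ∞) ≤ ((maximalIdeal R).spanFinrank : WithBot ℕ∞) := by
      refine le_trans ?_ h2
      obtain ⟨k, hk⟩ := WithBot.ne_bot_iff_exists.1 h3
      rw [← hk]
      exact_mod_cast le_add_self
    exact_mod_cast h4
  have hbdd : BddAbove S := ⟨_, hub⟩
  have hne : S.Nonempty := ⟨0, [], rfl, by simp, IsRegular.nil R M⟩
  have hcast : ((sSup S : ℕ) : WithBot (WithTop ℕ)) =
      (((maximalIdeal R).spanFinrank : ℕ) : WithBot (WithTop ℕ)) ↔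
      sSup S = (maximalIdeal R).spanFinrank := by
    exact Nat.cast_inj (R := WithBot ℕ∞)
  rw [hcast]
  constructor
  · intro hfree
    apply le_antisymm (csSup_le hne hub)
    obtain ⟨-, rs, hlen, hmem, hrs⟩ := regular_domain _ R rfl
    apply le_csSup hbdd
    refine ⟨rs, hlen, hmem, IsRegular.of_isWeaklyRegular_of_mem_maximalIdeal M hmem ?_⟩
    exact ((TensorProduct.lid R M).isWeaklyRegular_congr rs).1
      (hrs.isWeaklyRegular_rTensor (M₂ := M))
  · intro h
    have hmemS := Nat.sSup_mem hne hbdd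
    rw [h] at hmemS
    obtain ⟨rs, hlen, hmem, hrs⟩ := hmemS
    have := Module.Finite.small R M
    let e := Shrink.linearEquiv R M
    have : Module.Finite R (Shrink M) := Module.Finite.equiv e.symm
    have : Nontrivial (Shrink M) := e.toEquiv.nontrivial
    have := free_of_depth _ R (Shrink M) rfl ⟨rs, hlen, hmem, (e.isRegular_congr rs).2 hrs⟩
    exact Module.Free.of_equiv e
end

section
/- Let k be a field, n ≥ 1, and S = k[z₀,…,zₙ,x,y] the polynomial ring over k in the variables z₀,…,zₙ,x,y. Let ν ≥ 1, let G ∈ k[z₀,…,zₙ] be a nonzero polynomial in the variables z₀,…,zₙ only, and let G₀ ∈ k[z₀,…,zₙ] be an irreducible polynomial dividing G. Set J = (G·y, x^{ν+1}, x·y, y²) ⊆ S. Then the prime ideal (x, y, G₀) is an associated prime of the S-module S/J, and it strictly contains the prime ideal (x, y); in particular (x, y, G₀) is an embedded associated prime of J, so S/J has an embedded component. -/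
open MvPolynomial in
/-- The projection killing `x` and `y`. -/
noncomputable def prj (k : Type*) [Field k] (n : ℕ) :
    MvPolynomial (Fin (n + 1) ⊕ Fin 2) k →ₐ[k] MvPolynomial (Fin (n + 1)) k :=
  aeval (Sum.elim X (fun _ => 0))

open MvPolynomial in
lemma prj_rename {k : Type*} [Field k] (n : ℕ) (p : MvPolynomial (Fin (n + 1)) k) :
    prj k n (rename Sum.inl p) = p := by
  rw [prj, aeval_rename, Sum.elim_comp_inl, aeval_X_left_apply]

open MvPolynomial in
lemma prj_X {k : Type*} [Field k] (n : ℕ) (i : Fin 2) :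
    prj k n (X (Sum.inr i)) = 0 := by
  simp [prj]

open MvPolynomial in
lemma sub_mem_xy {k : Type*} [Field k] (n : ℕ) (p : MvPolynomial (Fin (n + 1) ⊕ Fin 2) k) :
    p - rename Sum.inl (prj k n p) ∈
      Ideal.span {(X (Sum.inr 0) : MvPolynomial (Fin (n + 1) ⊕ Fin 2) k), X (Sum.inr 1)} := by
  induction p using MvPolynomial.induction_on with
  | C a => simp [prj]
  | add p q hp hq =>
    rw [map_add, map_add, add_sub_add_comm]
    exact Ideal.add_mem _ hp hq
  | mul_X p i hp =>
    rcases i with i | i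
    · have : p * X (Sum.inl i) - rename Sum.inl (prj k n (p * X (Sum.inl i))) =
          (p - rename Sum.inl (prj k n p)) * X (Sum.inl i) := by
        rw [map_mul, map_mul, sub_mul]; congr 2; simp [prj]
      rw [this]
      exact Ideal.mul_mem_right _ _ hp
    · rw [map_mul, prj_X, mul_zero, map_zero, sub_zero]
      apply Ideal.mul_mem_left
      apply Ideal.subset_span
      fin_cases i <;> simp

open MvPolynomial in
lemma span_eq_comap {k : Type*} [Field k] (n : ℕ) (g : MvPolynomial (Fin (n + 1)) k) :
    Ideal.span {(X (Sum.inr 0) : MvPolynomial (Fin (n + 1) ⊕ Fin 2) k),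
          X (Sum.inr 1), rename Sum.inl g} = (Ideal.span {g}).comap (prj k n) := by
  apply le_antisymm
  · rw [Ideal.span_le]
    rintro p (rfl | rfl | rfl)
    · simp [prj_X]
    · simp [prj_X]
    · simp [prj_rename, Ideal.mem_span_singleton]
  · intro p hp
    rw [Ideal.mem_comap, Ideal.mem_span_singleton] at hp
    obtain ⟨c, hc⟩ := hp
    have h := sub_mem_xy n p
    rw [← sub_add_cancel p (rename Sum.inl (prj k n p))]
    apply Ideal.add_mem
    · exact Ideal.span_mono (by intro a; simp; tauto) h
    · rw [hc, map_mul]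
      exact Ideal.mul_mem_right _ _ (Ideal.subset_span (by simp))

open MvPolynomial in
lemma dvd_of_mem {k : Type*} [Field k] (n ν : ℕ) (hν : 1 ≤ ν) (G : MvPolynomial (Fin (n + 1)) k)
    (p : MvPolynomial (Fin (n + 1) ⊕ Fin 2) k)
    (hp : p ∈ Ideal.span {(rename Sum.inl G) * X (Sum.inr 1),
              (X (Sum.inr 0) : MvPolynomial (Fin (n + 1) ⊕ Fin 2) k) ^ (ν + 1),
              X (Sum.inr 0) * X (Sum.inr 1),
              X (Sum.inr 1) ^ 2}) :
    prj k n p = 0 ∧ G ∣ prj k n (pderiv (Sum.inr 1) p) := by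
  induction hp using Submodule.span_induction with
  | mem p hp =>
    rcases hp with rfl | rfl | rfl | rfl
    · simp [prj_X, prj_rename, Derivation.leibniz]
    · simp [prj_X, Derivation.leibniz_pow, pderiv_X]
    · simp [prj_X, Derivation.leibniz, pderiv_X]
    · simp [prj_X, Derivation.leibniz_pow, pderiv_X]
  | zero => simp
  | add p q _ _ hp hq =>
    refine ⟨by simp [hp.1, hq.1], ?_⟩
    rw [map_add, map_add]
    exact dvd_add hp.2 hq.2
  | smul a p _ hp =>
    refine ⟨by simp [hp.1], ?_⟩
    rw [smul_eq_mul, Derivation.leibniz]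
    simp only [smul_eq_mul, map_add, map_mul, hp.1, zero_mul, add_zero]
    exact Dvd.dvd.mul_left hp.2 _

open MvPolynomial in
/-- In `S = k[z₀,…,zₙ,x,y]`, with `G ≠ 0` a polynomial in the `z`-variables only, `G₀` an
irreducible polynomial in the `z`-variables dividing `G`, and `ν ≥ 1`, the prime
`(x, y, G₀)` is an associated prime of `S/(G·y, x^(ν+1), x·y, y²)` strictly
containing `(x, y)`; hence it is an embedded associated prime. -/
theorem stmt4 {k : Type*} [Field k] (n : ℕ) (hn : 1 ≤ n) (ν : ℕ) (hν : 1 ≤ ν)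
    (G₀' G : MvPolynomial (Fin (n + 1)) k) (hG : G ≠ 0)
    (hirr : Irreducible G₀') (hdvd : G₀' ∣ G) :
    (Ideal.span {(X (Sum.inr 0) : MvPolynomial (Fin (n + 1) ⊕ Fin 2) k),
          X (Sum.inr 1), rename Sum.inl G₀'}) ∈
        associatedPrimes (MvPolynomial (Fin (n + 1) ⊕ Fin 2) k)
          (MvPolynomial (Fin (n + 1) ⊕ Fin 2) k ⧸
            (Ideal.span {(rename Sum.inl G) * X (Sum.inr 1),
              (X (Sum.inr 0) : MvPolynomial (Fin (n + 1) ⊕ Fin 2) k) ^ (ν + 1),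
              X (Sum.inr 0) * X (Sum.inr 1),
              X (Sum.inr 1) ^ 2})) ∧
      Ideal.span {(X (Sum.inr 0) : MvPolynomial (Fin (n + 1) ⊕ Fin 2) k), X (Sum.inr 1)} <
        Ideal.span {(X (Sum.inr 0) : MvPolynomial (Fin (n + 1) ⊕ Fin 2) k),
          X (Sum.inr 1), rename Sum.inl G₀'} := by
  have hP0 : (Ideal.span {G₀'}).IsPrime :=
    (Ideal.span_singleton_prime hirr.ne_zero).2 hirr.prime
  refine ⟨?_, ?_⟩
  · rw [span_eq_comap]
    have hP : ((Ideal.span {G₀'}).comap (prj k n)).IsPrime := Ideal.IsPrime.comap _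
    refine ⟨hP, ?_⟩
    obtain ⟨H, rfl⟩ := hdvd
    have hH : H ≠ 0 := right_ne_zero_of_mul hG
    refine ⟨Ideal.Quotient.mk _ (rename Sum.inl H * X (Sum.inr 1)), ?_⟩
    apply le_antisymm
    · refine le_trans ?_ Ideal.le_radical
      rw [← span_eq_comap, Ideal.span_le]
      rintro p (rfl | rfl | rfl)
      all_goals
        rw [SetLike.mem_coe, Submodule.mem_colon_singleton, Submodule.mem_bot,
          ← Ideal.Quotient.mk_eq_mk, ← Submodule.Quotient.mk_smul, Submodule.Quotient.mk_eq_zero,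
          smul_eq_mul]
      · rw [mul_left_comm]
        exact Ideal.mul_mem_left _ _ (Ideal.subset_span (by simp))
      · rw [mul_left_comm, ← sq]
        exact Ideal.mul_mem_left _ _ (Ideal.subset_span (by simp))
      · rw [← mul_assoc, ← map_mul]
        exact Ideal.subset_span (by simp)
    · rw [hP.radical_le_iff]
      intro p hp
      rw [Submodule.mem_colon_singleton, Submodule.mem_bot,
          ← Ideal.Quotient.mk_eq_mk, ← Submodule.Quotient.mk_smul, Submodule.Quotient.mk_eq_zero,
          smul_eq_mul] at hp
      have h := (dvd_of_mem n ν hν _ _ hp).2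
      rw [← mul_assoc, Derivation.leibniz] at h
      simp only [pderiv_X_self, smul_eq_mul, map_add, map_mul, prj_X, prj_rename, zero_mul,
        add_zero, mul_one, map_one] at h
      rw [Ideal.mem_comap, Ideal.mem_span_singleton]
      exact (mul_dvd_mul_iff_right hH).1 h
  · refine lt_of_le_of_ne (Ideal.span_mono (by intro a; simp; tauto)) ?_
    intro h
    have h1 : rename Sum.inl G₀' ∈ Ideal.span
        {(X (Sum.inr 0) : MvPolynomial (Fin (n + 1) ⊕ Fin 2) k), X (Sum.inr 1)} := by
      rw [h]; exact Ideal.subset_span (by simp)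
    have h2 : Ideal.span {(X (Sum.inr 0) : MvPolynomial (Fin (n + 1) ⊕ Fin 2) k), X (Sum.inr 1)}
        ≤ RingHom.ker (prj k n) := by
      rw [Ideal.span_le]
      rintro p (rfl | rfl) <;> simp [RingHom.mem_ker, prj_X]
    have h3 := h2 h1
    rw [RingHom.mem_ker, prj_rename] at h3
    exact hirr.ne_zero h3
end
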